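/- Let m ≥ 3 and 0 ≤ r ≤ m−1, and write U_h = U_h(RM(r,m)), α = α^(m), β = β^(m). Then for all integers i with 0 ≤ i ≤ α − 2^{m−1} and all integers j with 0 ≤ j ≤ β − (α − 2^{m−1} + 1), one has (U_α − U_{α−i}) + (U_β − U_{β−j}) ≥ U_{i+j+1} − U_1. -/

import Mathlib

open Module

/-- The submodule of vectors supported on `J` (i.e. zero outside `J`). -/
def supportedOn (F : Type) [Field F] {n : ℕ} (J : Set (Fin n)) : Submodule F (Fin n → F) :=
  Submodule.pi Jᶜ fun _ => ⊥

/-- Dimension of the shortening `C_J` of the code `C` to the coordinates in `J`. -/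
noncomputable def shortDim {F : Type} [Field F] {n : ℕ}
    (C : Submodule F (Fin n → F)) (J : Set (Fin n)) : ℕ :=
  finrank F ↥(C ⊓ supportedOn F J)

/-- Support of a subcode. -/
def chi {F : Type} [Field F] {n : ℕ} (D : Submodule F (Fin n → F)) : Set (Fin n) :=
  {i | ∃ c ∈ D, c i ≠ 0}

/-- `Ucap C s`: maximal dimension of a subcode of `C` whose support has size at most `s`. -/
noncomputable def Ucap {F : Type} [Field F] {n : ℕ}
    (C : Submodule F (Fin n → F)) (s : ℕ) : ℕ :=
  sSup {d : ℕ | ∃ D : Submodule F (Fin n → F), D ≤ C ∧ (chi D).ncard ≤ s ∧ finrank F ↥D = d}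

/-- The binary Reed–Muller code `RM(r,m)`: the evaluation vectors, at the points of
`{0,1}^m` listed in the standard bit order, of the `m`-variable polynomials over `F₂`
of total degree at most `r`. -/
def RMcode (r m : ℕ) : Submodule (ZMod 2) (Fin (2 ^ m) → ZMod 2) :=
  Submodule.span (ZMod 2)
    {w | ∃ f : MvPolynomial (Fin m) (ZMod 2), f.totalDegree ≤ r ∧
      w = fun i => MvPolynomial.eval (fun j : Fin m => if Nat.testBit i.val j.val then 1 else 0) f}

/-- `α(m)`: the largest integer not exceeding `(2/3)·2^m`. -/
def alph (m : ℕ) : ℕ := 2 ^ (m + 1) / 3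

/-- `β(m)`: the largest integer not exceeding `(1/3)·2^m`. -/
def bet (m : ℕ) : ℕ := 2 ^ m / 3

/-!
Call an integer *heavy* if its binary weight is at least `m - r`. The number `U_s` counts the heavy
integers below `s`. It is at least that, because the indicator vectors of the sets of integers whose
digits are dominated by those of a heavy `k < s` span a subcode supported on `[0, s)`. It is at most
that by induction on `m`: `RM(r, m + 1)` consists of the words `(u | u + v)`, and the bounds for the
two halves add up because counts of heavy integers are superadditive, even when the threshold is
lowered by one for the shorter interval.

The differences in the theorem count the heavy integers among the last `i` below `α` and the last
`j` below `β`. Removing the leading digit lowers the threshold by one and takes `(α, β)` for `m + 2`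
to `(α, β)` for `m`, so the inequality follows by induction as long as `i` and `j` do not exceed the
smaller `α` and `β`. Beyond that, the integers counted are the last ones of a full block
`[0, 2 ^ k)`. Complementing digits turns superadditivity into the statement that these contain at
least as many heavy integers as any other interval of the same length inside the block.
-/

open Finset

section BinaryWeight

/-- The binary weight of `n`: the number of ones in its binary expansion. -/
def binaryWeight (n : ℕ) : ℕ := n.bitIndices.length

theorem binaryWeight_zero : binaryWeight 0 = 0 := by simp [binaryWeight]

theorem binaryWeight_one : binaryWeight 1 = 1 := by simp [binaryWeight]

theorem binaryWeight_two_mul (n : ℕ) : binaryWeight (2 * n) = binaryWeight n := by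
  simp [binaryWeight]

theorem binaryWeight_two_mul_add_one (n : ℕ) :
    binaryWeight (2 * n + 1) = binaryWeight n + 1 := by
  simp [binaryWeight]

theorem binaryWeight_pos {n : ℕ} (hn : 0 < n) : 0 < binaryWeight n := by
  refine List.length_pos_iff.2 fun h => hn.ne' ?_
  rw [← Nat.sum_map_two_pow_bitIndices n, h, List.map_nil, List.sum_nil]

theorem binaryWeight_succ_le (n : ℕ) : binaryWeight (n + 1) ≤ binaryWeight n + 1 := by
  induction n using Nat.strong_induction_on with
  | _ n ih =>
    obtain ⟨q, rfl | rfl⟩ := Nat.even_or_odd' n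
    · rw [binaryWeight_two_mul_add_one, binaryWeight_two_mul]
    · rw [show 2 * q + 1 + 1 = 2 * (q + 1) by ring, binaryWeight_two_mul,
        binaryWeight_two_mul_add_one]
      exact (ih q (by omega)).trans (by omega)

theorem binaryWeight_eq_card_filter_range {k n : ℕ} (hn : n < 2 ^ k) :
    binaryWeight n = #{j ∈ range k | n.testBit j} := by
  rw [binaryWeight, ← List.toFinset_card_of_nodup Nat.bitIndices_nodup]
  congr 1
  ext j
  simp only [List.mem_toFinset, Nat.mem_bitIndices, mem_filter, mem_range, iff_and_self]
  exact fun hj =>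
    (Nat.pow_lt_pow_iff_right one_lt_two).1 ((Nat.ge_two_pow_of_testBit hj).trans_lt hn)

theorem binaryWeight_add_binaryWeight_compl {k n : ℕ} (hn : n < 2 ^ k) :
    binaryWeight n + binaryWeight (2 ^ k - (n + 1)) = k := by
  have hcompl : {j ∈ range k | (2 ^ k - (n + 1)).testBit j} = {j ∈ range k | ¬ n.testBit j} :=
    filter_congr fun j hj => by simp [Nat.testBit_two_pow_sub_succ hn, mem_range.1 hj]
  rw [binaryWeight_eq_card_filter_range hn, binaryWeight_eq_card_filter_range (k := k) (by omega),
    hcompl, card_filter_add_card_filter_not, card_range]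

theorem testBit_two_pow_add {k n : ℕ} (hn : n < 2 ^ k) (j : ℕ) :
    (2 ^ k + n).testBit j = (decide (k = j) || n.testBit j) := by
  rw [← mul_one (2 ^ k), Nat.two_pow_add_eq_or_of_lt hn, mul_one, Nat.testBit_or,
    Nat.testBit_two_pow]

theorem binaryWeight_two_pow_add {k n : ℕ} (hn : n < 2 ^ k) :
    binaryWeight (2 ^ k + n) = binaryWeight n + 1 := by
  have hbits : {j ∈ range k | (2 ^ k + n).testBit j} = {j ∈ range k | n.testBit j} :=
    filter_congr fun j hj => by simp [testBit_two_pow_add hn, (mem_range.1 hj).ne']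
  rw [binaryWeight_eq_card_filter_range (show 2 ^ k + n < 2 ^ (k + 1) by omega),
    range_add_one, filter_insert, if_pos (by simp [testBit_two_pow_add hn]),
    card_insert_of_notMem (by simp), hbits, ← binaryWeight_eq_card_filter_range hn]

end BinaryWeight

section HeavyCount

/-- The number of *heavy* integers `k < s`, those of binary weight at least `t`. Thresholds are
natural numbers, and the truncation `0 - 1 = 0` in the threshold `t - 1` below is harmless because
thresholds `-1` and `0` both admit every integer. -/
def heavyCount (t s : ℕ) : ℕ := Nat.count (t ≤ binaryWeight ·) s

theorem heavyCount_zero (t : ℕ) : heavyCount t 0 = 0 := Nat.count_zero _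

theorem heavyCount_succ (t s : ℕ) :
    heavyCount t (s + 1) = heavyCount t s + if t ≤ binaryWeight s then 1 else 0 :=
  Nat.count_succ _ s

theorem heavyCount_one (t : ℕ) : heavyCount t 1 = if t = 0 then 1 else 0 := by
  simp [heavyCount_succ, heavyCount_zero, binaryWeight_zero]

theorem heavyCount_zero_left (s : ℕ) : heavyCount 0 s = s := by
  simp [heavyCount]

theorem heavyCount_mono (t : ℕ) {a b : ℕ} (h : a ≤ b) : heavyCount t a ≤ heavyCount t b :=
  Nat.count_monotone _ h

theorem heavyCount_anti {t u : ℕ} (h : t ≤ u) (s : ℕ) : heavyCount u s ≤ heavyCount t s :=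
  Nat.count_mono_left fun _ _ hk => h.trans hk

theorem heavyCount_two_mul (t s : ℕ) :
    heavyCount t (2 * s) = heavyCount t s + heavyCount (t - 1) s := by
  induction s with
  | zero => simp only [mul_zero, heavyCount_zero]
  | succ s ih =>
    rw [show 2 * (s + 1) = 2 * s + 1 + 1 by ring]
    simp only [heavyCount_succ, ih, binaryWeight_two_mul, binaryWeight_two_mul_add_one,
      tsub_le_iff_right]
    omega

theorem heavyCount_two_mul_add_one (t s : ℕ) :
    heavyCount t (2 * s + 1) = heavyCount t (s + 1) + heavyCount (t - 1) s := by
  rw [heavyCount_succ, heavyCount_two_mul, heavyCount_succ, binaryWeight_two_mul]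
  omega

theorem heavyCount_two_pow_add (t : ℕ) {k n : ℕ} (hn : n ≤ 2 ^ k) :
    heavyCount t (2 ^ k + n) = heavyCount t (2 ^ k) + heavyCount (t - 1) n := by
  induction n with
  | zero => rw [heavyCount_zero, add_zero, add_zero]
  | succ n ih =>
    rw [← add_assoc, heavyCount_succ, heavyCount_succ, ih (by omega),
      binaryWeight_two_pow_add hn, add_assoc]
    simp only [tsub_le_iff_right]

-- Splitting by parity reduces both sides to half the size. If `a` and `b` are both odd the halves
-- overshoot by one, and `binaryWeight_succ_le` pays for the difference.
theorem heavyCount_pred_add_heavyCount_le (t : ℕ) {a b : ℕ} (hab : a ≤ b) :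
    heavyCount (t - 1) a + heavyCount t b ≤ heavyCount t (a + b) := by
  induction a using Nat.strong_induction_on generalizing b t with
  | _ a ih =>
    obtain rfl | rfl | ha : a = 0 ∨ a = 1 ∨ 2 ≤ a := by omega
    · rw [heavyCount_zero, zero_add, zero_add]
    · have hb := binaryWeight_pos hab
      rw [add_comm 1 b, heavyCount_one, heavyCount_succ]
      split_ifs <;> omega
    obtain ⟨d, rfl | rfl⟩ := Nat.even_or_odd' a <;> obtain ⟨c, rfl | rfl⟩ := Nat.even_or_odd' b
    · have ht := ih d (by omega) t (b := c) (by omega)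
      have ht' := ih d (by omega) (t - 1) (b := c) (by omega)
      rw [← mul_add]
      simp only [heavyCount_two_mul]
      omega
    · have ht := ih d (by omega) t (b := c + 1) (by omega)
      have ht' := ih d (by omega) (t - 1) (b := c) (by omega)
      rw [← add_assoc] at ht
      rw [show 2 * d + (2 * c + 1) = 2 * (d + c) + 1 by ring]
      simp only [heavyCount_two_mul, heavyCount_two_mul_add_one]
      omega
    · have ht := ih (d + 1) (by omega) t (b := c) (by omega)
      have ht' := ih d (by omega) (t - 1) (b := c) (by omega)
      rw [add_right_comm] at ht
      rw [show 2 * d + 1 + 2 * c = 2 * (d + c) + 1 by ring]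
      simp only [heavyCount_two_mul, heavyCount_two_mul_add_one]
      omega
    · have ht := ih (d + 1) (by omega) t (b := c + 1) (by omega)
      have ht' := ih d (by omega) (t - 1) (b := c) (by omega)
      have hcarry := binaryWeight_succ_le (d + c)
      rw [show d + 1 + (c + 1) = d + c + 1 + 1 by ring, heavyCount_succ t (d + c + 1)] at ht
      rw [show 2 * d + 1 + (2 * c + 1) = 2 * (d + c + 1) by ring, heavyCount_two_mul,
        heavyCount_two_mul_add_one, heavyCount_two_mul_add_one, heavyCount_succ (t - 1) (d + c)]
      split_ifs at * <;> omega

theorem heavyCount_add_heavyCount_le (t a b : ℕ) :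
    heavyCount t a + heavyCount t b ≤ heavyCount t (a + b) := by
  wlog hab : a ≤ b generalizing a b
  · rw [add_comm, add_comm a]
    exact this b a (by omega)
  · have hshift := heavyCount_pred_add_heavyCount_le t hab
    have hanti := heavyCount_anti (Nat.sub_le t 1) a
    omega

/-- The number of heavy integers among the last `x` integers below `s`. -/
def topCount (t s x : ℕ) : ℕ := heavyCount t s - heavyCount t (s - x)

theorem heavyCount_sub_add_topCount (t s x : ℕ) :
    heavyCount t (s - x) + topCount t s x = heavyCount t s :=
  Nat.add_sub_cancel' (heavyCount_mono t (Nat.sub_le s x))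

theorem topCount_zero_left {s x : ℕ} (hx : x ≤ s) : topCount 0 s x = x := by
  rw [topCount, heavyCount_zero_left, heavyCount_zero_left, Nat.sub_sub_self hx]

theorem topCount_add (t s x y : ℕ) :
    topCount t s (x + y) = topCount t s x + topCount t (s - x) y := by
  have hx := heavyCount_sub_add_topCount t s x
  have hy := heavyCount_sub_add_topCount t (s - x) y
  have hxy := heavyCount_sub_add_topCount t s (x + y)
  rw [Nat.sub_sub] at hy
  omega

theorem topCount_succ_one (t s : ℕ) :
    topCount t (s + 1) 1 = if t ≤ binaryWeight s then 1 else 0 := by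
  rw [topCount, heavyCount_succ, Nat.add_sub_cancel, Nat.add_sub_cancel_left]

theorem topCount_two_pow_add (t : ℕ) {k s x : ℕ} (hs : s ≤ 2 ^ k) (hx : x ≤ s) :
    topCount t (2 ^ k + s) x = topCount (t - 1) s x := by
  rw [topCount, topCount, Nat.add_sub_assoc hx, heavyCount_two_pow_add t hs,
    heavyCount_two_pow_add t (by omega), Nat.add_sub_add_left]

theorem topCount_two_pow_succ (t : ℕ) {k x : ℕ} (hx : x ≤ 2 ^ k) :
    topCount (t + 1) (2 ^ (k + 1)) x = topCount t (2 ^ k) x := by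
  rw [pow_succ, mul_two, topCount_two_pow_add _ le_rfl hx, Nat.add_sub_cancel]

-- `n ↦ 2 ^ k - 1 - n` complements all `k` binary digits, so it exchanges weight at least `t` with
-- weight less than `k + 1 - t`.
theorem heavyCount_add_topCount_two_pow (t : ℕ) {k s : ℕ} (hs : s ≤ 2 ^ k) :
    heavyCount (k + 1 - t) s + topCount t (2 ^ k) s = s := by
  induction s with
  | zero => simp only [topCount, heavyCount_zero, Nat.sub_zero, Nat.sub_self]
  | succ s ih =>
    have hcompl := binaryWeight_add_binaryWeight_compl hs
    have hrest : 2 ^ k - s = 2 ^ k - (s + 1) + 1 := by omega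
    rw [topCount_add, heavyCount_succ, hrest, topCount_succ_one]
    split_ifs <;> omega

-- Under complementation of all digits this is superadditivity for the threshold `k + 1 - t`.
theorem heavyCount_add_le_of_add_le_two_pow (t : ℕ) {k c x : ℕ} (h : c + x ≤ 2 ^ k) :
    heavyCount t (c + x) ≤ heavyCount t c + topCount t (2 ^ k) x := by
  obtain ⟨a, ha⟩ := Nat.exists_eq_add_of_le h
  have hsuper := heavyCount_add_heavyCount_le (k + 1 - t) a x
  have hdual_a := heavyCount_add_topCount_two_pow t (show a ≤ 2 ^ k by omega)
  have hdual_x := heavyCount_add_topCount_two_pow t (show x ≤ 2 ^ k by omega)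
  have hdual_ax := heavyCount_add_topCount_two_pow t (show a + x ≤ 2 ^ k by omega)
  have hsplit_a := heavyCount_sub_add_topCount t (2 ^ k) a
  have hsplit_ax := heavyCount_sub_add_topCount t (2 ^ k) (a + x)
  rw [show 2 ^ k - a = c + x by omega] at hsplit_a
  rw [show 2 ^ k - (a + x) = c by omega] at hsplit_ax
  omega

theorem heavyCount_add_le_heavyCount_add_topCount (t : ℕ) {k c x : ℕ}
    (h : c + 2 * x ≤ 2 ^ (k + 1)) :
    heavyCount t (c + x) ≤ heavyCount t c + topCount t (2 ^ k) x := by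
  obtain hle | hlt := le_or_gt (c + x) (2 ^ k)
  · exact heavyCount_add_le_of_add_le_two_pow t hle
  · obtain ⟨z, hz⟩ := Nat.exists_eq_add_of_lt hlt
    have hshift := heavyCount_pred_add_heavyCount_le t (show z + 1 ≤ 2 ^ k - x by omega)
    have hsplit := heavyCount_sub_add_topCount t (2 ^ k) x
    rw [show z + 1 + (2 ^ k - x) = c by omega] at hshift
    rw [hz, add_assoc, heavyCount_two_pow_add t (by omega)]
    omega

theorem heavyCount_succ_add_le_heavyCount_add_topCount (t : ℕ) {k c x : ℕ} (hx : x ≤ 2 ^ k)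
    (h : c + x ≤ 2 ^ (k + 1)) :
    heavyCount (t + 1) (c + x) ≤ heavyCount (t + 1) c + topCount t (2 ^ k) x := by
  rw [← topCount_two_pow_succ t hx]
  exact heavyCount_add_le_of_add_le_two_pow (t + 1) h

end HeavyCount

section ThirdsOfTwoPow

theorem alph_add_two (m : ℕ) : alph (m + 2) = 2 ^ (m + 1) + alph m := by
  simp only [alph, pow_succ]
  omega

theorem bet_add_two (m : ℕ) : bet (m + 2) = 2 ^ m + bet m := by
  simp only [bet, pow_succ]
  omega

theorem bet_le_alph (m : ℕ) : bet m ≤ alph m :=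
  Nat.div_le_div_right (Nat.pow_le_pow_right two_pos m.le_succ)

theorem alph_add_bet_add_one (m : ℕ) : alph m + bet m + 1 = 2 ^ m := by
  have hmod : 2 ^ m % 3 ≠ 0 := fun h => by
    have := Nat.prime_three.dvd_of_dvd_pow (Nat.dvd_of_mod_eq_zero h)
    omega
  simp only [alph, bet, pow_succ]
  omega

theorem topCount_alph_add_two (t : ℕ) {m i : ℕ} (hi : i ≤ alph m) :
    topCount t (alph (m + 2)) i = topCount (t - 1) (alph m) i := by
  have hsum := alph_add_bet_add_one m
  rw [alph_add_two, topCount_two_pow_add t (by omega) hi]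

theorem topCount_bet_add_two (t : ℕ) {m j : ℕ} (hj : j ≤ bet m) :
    topCount t (bet (m + 2)) j = topCount (t - 1) (bet m) j := by
  have hsum := alph_add_bet_add_one m
  rw [bet_add_two, topCount_two_pow_add t (by omega) hj]

theorem topCount_alph_add_two_add (t m x : ℕ) :
    topCount t (alph (m + 2)) (alph m + x) =
      topCount t (alph (m + 2)) (alph m) + topCount t (2 ^ (m + 1)) x := by
  rw [topCount_add, alph_add_two, Nat.add_sub_cancel]

theorem topCount_bet_add_two_add (t m x : ℕ) :
    topCount t (bet (m + 2)) (bet m + x) =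
      topCount t (bet (m + 2)) (bet m) + topCount t (2 ^ m) x := by
  rw [topCount_add, bet_add_two, Nat.add_sub_cancel]

theorem heavyCount_succ_le_topCount_alph_add_topCount_bet_step {m : ℕ}
    (ih : ∀ t {i j}, i ≤ alph m → j ≤ bet m →
      heavyCount (t + 1) (i + j + 1) ≤ topCount t (alph m) i + topCount t (bet m) j)
    (t : ℕ) {i j : ℕ} (hi : i ≤ alph m) (hj : j ≤ bet (m + 2)) :
    heavyCount (t + 1) (i + j + 1) ≤
      topCount t (alph (m + 2)) i + topCount t (bet (m + 2)) j := by
  have small : ∀ {j}, j ≤ bet m → heavyCount (t + 1) (i + j + 1) ≤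
      topCount t (alph (m + 2)) i + topCount t (bet (m + 2)) j := fun hj => by
    rw [topCount_alph_add_two t hi, topCount_bet_add_two t hj]
    exact (heavyCount_anti (by omega) _).trans (ih (t - 1) hi hj)
  obtain hle | ⟨x, rfl⟩ := (le_total j (bet m)).imp_right Nat.exists_eq_add_of_le
  · exact small hle
  have hsmall := small le_rfl
  have hsum := alph_add_bet_add_one m
  rw [bet_add_two] at hj
  have hblock := heavyCount_succ_add_le_heavyCount_add_topCount t (k := m)
    (c := i + bet m + 1) (x := x) (by omega) (by omega)
  rw [topCount_bet_add_two_add, show i + (bet m + x) + 1 = i + bet m + 1 + x by ring]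
  omega

theorem heavyCount_succ_le_topCount_alph_add_topCount_bet (m t : ℕ) {i j : ℕ} (hi : i ≤ alph m)
    (hj : j ≤ bet m) :
    heavyCount (t + 1) (i + j + 1) ≤ topCount t (alph m) i + topCount t (bet m) j := by
  induction m using Nat.twoStepInduction generalizing t i j with
  | zero =>
    obtain rfl : i = 0 := by simpa [alph] using hi
    obtain rfl : j = 0 := by simpa [bet] using hj
    simp [heavyCount_one]
  | one =>
    obtain rfl : j = 0 := by simpa [bet] using hj
    have hi : i ≤ 1 := by simpa [alph] using hi
    interval_cases i
    · simp [heavyCount_one]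
    · simp [alph, topCount, heavyCount_succ, heavyCount_zero, binaryWeight_zero, binaryWeight_one]
  | more m ih _ =>
    have step {i j : ℕ} := heavyCount_succ_le_topCount_alph_add_topCount_bet_step ih t
      (i := i) (j := j)
    obtain hle | ⟨x, rfl⟩ := (le_total i (alph m)).imp_right Nat.exists_eq_add_of_le
    · exact step hle hj
    have hstep := step le_rfl hj
    have hsum := alph_add_bet_add_one m
    rw [alph_add_two] at hi
    rw [bet_add_two] at hj
    have hblock := heavyCount_succ_add_le_heavyCount_add_topCount t (k := m + 1)
      (c := alph m + j + 1) (x := x) (by omega) (by omega)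
    rw [topCount_alph_add_two_add, show alph m + x + j + 1 = alph m + j + 1 + x by ring]
    omega

theorem heavyCount_le_heavyCount_one_add_topCount (t : ℕ) {m i j : ℕ} (hi : i ≤ alph m)
    (hj : i + 2 * j < 2 ^ m + bet (m + 2)) :
    heavyCount t (i + j + 1) ≤
      heavyCount t 1 + topCount t (alph (m + 2)) i + topCount t (bet (m + 2)) j := by
  have hα := alph_add_two m
  have hβ := bet_add_two m
  rw [pow_succ'] at hα
  obtain _ | t := t
  · rw [topCount_zero_left (by omega), topCount_zero_left (by omega), heavyCount_zero_left,
      heavyCount_zero_left]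
    omega
  have small : ∀ {j}, j ≤ bet m → heavyCount (t + 1) (i + j + 1) ≤
      topCount (t + 1) (alph (m + 2)) i + topCount (t + 1) (bet (m + 2)) j := fun hj => by
    rw [topCount_alph_add_two _ hi, topCount_bet_add_two _ hj]
    exact heavyCount_succ_le_topCount_alph_add_topCount_bet m t hi hj
  obtain hle | ⟨x, rfl⟩ := (le_total j (bet m)).imp_right Nat.exists_eq_add_of_le
  · exact (small hle).trans (by omega)
  have hsmall := small le_rfl
  have hblock := heavyCount_add_le_heavyCount_add_topCount (t + 1) (k := m)
    (c := i + bet m + 1) (x := x) (by omega)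
  rw [topCount_bet_add_two_add, show i + (bet m + x) + 1 = i + bet m + 1 + x by ring]
  omega

end ThirdsOfTwoPow

section Support

variable {F : Type} [Field F]

theorem chi_mono {n : ℕ} {D E : Submodule F (Fin n → F)} (h : D ≤ E) : chi D ⊆ chi E :=
  fun _ ⟨c, hc, hi⟩ => ⟨c, h hc, hi⟩

theorem chi_subset_iff {n : ℕ} {D : Submodule F (Fin n → F)} {J : Set (Fin n)} :
    chi D ⊆ J ↔ D ≤ supportedOn F J := by
  simp only [Set.subset_def, chi, Set.mem_ofPred_eq, SetLike.le_def, supportedOn, Submodule.mem_pi,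
    Set.mem_compl_iff, Submodule.mem_bot]
  exact ⟨fun h c hc i hi => by_contra fun hne => hi (h i ⟨c, hc, hne⟩),
    fun h i ⟨c, hc, hne⟩ => by_contra fun hi => hne (h hc i hi)⟩

theorem chi_map_funLeft {k n : ℕ} (f : Fin k → Fin n) (D : Submodule F (Fin n → F)) :
    chi (D.map (LinearMap.funLeft F F f)) = f ⁻¹' chi D := by
  simp [chi, Set.preimage, LinearMap.funLeft_apply]

theorem finrank_le_ncard_chi {n : ℕ} (D : Submodule F (Fin n → F)) :
    finrank F D ≤ (chi D).ncard := by
  classical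
  let restrict := (LinearMap.funLeft F F (Subtype.val : chi D → Fin n)).domRestrict D
  have hinj : Function.Injective restrict := by
    refine (injective_iff_map_eq_zero _).2 fun c hc => Subtype.ext (funext fun i => ?_)
    by_contra hi
    exact hi (congrFun hc ⟨i, c, c.2, hi⟩)
  simpa [Set.ncard_eq_toFinset_card'] using LinearMap.finrank_le_finrank_of_injective hinj

theorem le_Ucap {n s : ℕ} {C D : Submodule F (Fin n → F)} (hD : D ≤ C)
    (hs : (chi D).ncard ≤ s) : finrank F D ≤ Ucap C s := by
  refine le_csSup ⟨s, ?_⟩ ⟨D, hD, hs, rfl⟩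
  rintro _ ⟨E, _, hE, rfl⟩
  exact (finrank_le_ncard_chi E).trans hE

theorem Ucap_le {n s b : ℕ} {C : Submodule F (Fin n → F)}
    (h : ∀ D ≤ C, (chi D).ncard ≤ s → finrank F D ≤ b) : Ucap C s ≤ b := by
  refine csSup_le ⟨0, ⊥, bot_le, by simp [chi], finrank_bot F _⟩ ?_
  rintro _ ⟨D, hD, hs, rfl⟩
  exact h D hD hs

end Support

section LinearAlgebra

variable {K V W : Type*} [Field K] [AddCommGroup V] [Module K V] [FiniteDimensional K V]
  [AddCommGroup W] [Module K W]

theorem finrank_map_add_finrank_inf_ker (p : V →ₗ[K] W) (D : Submodule K V) :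
    finrank K (D.map p) + finrank K (D ⊓ LinearMap.ker p : Submodule K V) = finrank K D := by
  rw [← (p.domRestrict D).finrank_range_add_finrank_ker, LinearMap.range_domRestrict,
    LinearMap.ker_domRestrict, ← Submodule.map_comap_subtype,
    (Submodule.equivMapOfInjective _ D.injective_subtype _).finrank_eq]

theorem finrank_eq_finrank_map_add_finrank_map {W' : Type*} [AddCommGroup W'] [Module K W']
    {p : V →ₗ[K] W} {q : V →ₗ[K] W'} (hpq : LinearMap.ker p ⊓ LinearMap.ker q = ⊥)
    (D : Submodule K V) :
    finrank K D = finrank K (D.map p) + finrank K ((D ⊓ LinearMap.ker p).map q) := by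
  have hq := finrank_map_add_finrank_inf_ker q (D ⊓ LinearMap.ker p)
  rw [inf_assoc, hpq, inf_bot_eq, finrank_bot, add_zero] at hq
  rw [hq, finrank_map_add_finrank_inf_ker]

theorem linearIndependent_of_triangular {ι α : Type*} [Finite ι] [LinearOrder ι]
    (v : ι → α → K) (p : ι → α) (hdiag : ∀ i, v i (p i) ≠ 0)
    (htri : ∀ i j, i < j → v i (p j) = 0) : LinearIndependent K v := by
  cases nonempty_fintype ι
  refine LinearIndependent.of_comp (LinearMap.funLeft K K p)
    (Matrix.linearIndependent_rows_of_det_ne_zero (A := .of fun i j => v i (p j)) ?_)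
  rw [Matrix.det_of_isLowerTriangular (.of fun i j => v i (p j)) fun i j hij => htri i j hij]
  exact prod_ne_zero_iff.2 fun i _ => hdiag i

end LinearAlgebra

section PlotkinCode

theorem ncard_preimage_inl_add_ncard_preimage_inr {α β : Type*} [Finite α] [Finite β]
    (s : Set (α ⊕ β)) : (Sum.inl ⁻¹' s).ncard + (Sum.inr ⁻¹' s).ncard = s.ncard := by
  have hdisj : Disjoint (Sum.inl '' (Sum.inl ⁻¹' s)) (Sum.inr '' (Sum.inr ⁻¹' s)) :=
    Set.disjoint_image_inl_image_inr
  rw [← Set.ncard_image_of_injective (Sum.inl ⁻¹' s) Sum.inl_injective,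
    ← Set.ncard_image_of_injective (Sum.inr ⁻¹' s) Sum.inr_injective,
    ← Set.ncard_union_eq hdisj, Set.image_preimage_inl_union_image_preimage_inr]

variable (F : Type) [Field F]

/-- The identification of two copies of the index set of length `2 ^ m` with that of length
`2 ^ (m + 1)`: bit `m` is `0` on the left copy and `1` on the right copy. -/
def halvesEquiv (m : ℕ) : Fin (2 ^ m) ⊕ Fin (2 ^ m) ≃ Fin (2 ^ (m + 1)) :=
  finSumFinEquiv.trans (finCongr (by rw [pow_succ, mul_two]))

theorem val_halvesEquiv_inl {m : ℕ} (i : Fin (2 ^ m)) :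
    (halvesEquiv m (.inl i) : ℕ) = i := by
  simp [halvesEquiv]

theorem val_halvesEquiv_inr {m : ℕ} (i : Fin (2 ^ m)) :
    (halvesEquiv m (.inr i) : ℕ) = 2 ^ m + i := by
  simp [halvesEquiv, add_comm]

/-- Restriction of words of length `2 ^ (m + 1)` to the coordinates whose bit `m` is `0`. -/
def lowerHalf (m : ℕ) : (Fin (2 ^ (m + 1)) → F) →ₗ[F] (Fin (2 ^ m) → F) :=
  LinearMap.funLeft F F (halvesEquiv m ∘ Sum.inl)

/-- Restriction of words of length `2 ^ (m + 1)` to the coordinates whose bit `m` is `1`. -/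
def upperHalf (m : ℕ) : (Fin (2 ^ (m + 1)) → F) →ₗ[F] (Fin (2 ^ m) → F) :=
  LinearMap.funLeft F F (halvesEquiv m ∘ Sum.inr)

theorem ker_lowerHalf_inf_ker_upperHalf (m : ℕ) :
    LinearMap.ker (lowerHalf F m) ⊓ LinearMap.ker (upperHalf F m) = ⊥ := by
  refine eq_bot_iff.2 fun v ⟨hlower, hupper⟩ => funext fun i => ?_
  obtain ⟨i | i, rfl⟩ := (halvesEquiv m).surjective i
  · exact congrFun hlower i
  · exact congrFun hupper i

variable {F} in
theorem ncard_chi_lowerHalf_add_ncard_chi_upperHalf {m : ℕ}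
    (D : Submodule F (Fin (2 ^ (m + 1)) → F)) :
    (chi (D.map (lowerHalf F m))).ncard + (chi (D.map (upperHalf F m))).ncard =
      (chi D).ncard := by
  rw [lowerHalf, upperHalf, chi_map_funLeft, chi_map_funLeft, Set.preimage_comp, Set.preimage_comp,
    ncard_preimage_inl_add_ncard_preimage_inr, Set.ncard_preimage_of_injective_subset_range
      (halvesEquiv m).injective (by rw [(halvesEquiv m).range_eq_univ]; exact Set.subset_univ _)]

/-- The codes of length `2 ^ m` generated by the `(u | u + v)` construction. Over `F₂`,
`plotkinCode F t m` is `RM(m - t, m)`: the index `t` is the codegree, so that passing from `m + 1`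
to `m` lowers `t` for the component `u` and keeps it for the component `v`. -/
def plotkinCode : (t m : ℕ) → Submodule F (Fin (2 ^ m) → F)
  | t, 0 => if t = 0 then ⊤ else ⊥
  | t, m + 1 => (plotkinCode (t - 1) m).comap (lowerHalf F m) ⊓
      (plotkinCode t m).comap (upperHalf F m - lowerHalf F m)

theorem plotkinCode_anti {t u : ℕ} (h : t ≤ u) (m : ℕ) :
    plotkinCode F u m ≤ plotkinCode F t m := by
  induction m generalizing t u with
  | zero =>
    simp only [plotkinCode]
    split_ifs <;> first | omega | simp
  | succ m ih =>
    exact inf_le_inf (Submodule.comap_mono (ih (by omega))) (Submodule.comap_mono (ih h))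

variable {F}

theorem upperHalf_mem_plotkinCode {t m : ℕ} {v : Fin (2 ^ (m + 1)) → F}
    (hv : v ∈ plotkinCode F t (m + 1)) : upperHalf F m v ∈ plotkinCode F (t - 1) m := by
  obtain ⟨hlower, hdiff⟩ := hv
  simpa using add_mem (plotkinCode_anti F (Nat.sub_le t 1) m hdiff) hlower

theorem upperHalf_mem_plotkinCode_of_lowerHalf_eq_zero {t m : ℕ} {v : Fin (2 ^ (m + 1)) → F}
    (hv : v ∈ plotkinCode F t (m + 1)) (h : lowerHalf F m v = 0) :
    upperHalf F m v ∈ plotkinCode F t m := by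
  simpa [h] using hv.2

theorem lowerHalf_mem_plotkinCode_of_upperHalf_eq_zero {t m : ℕ} {v : Fin (2 ^ (m + 1)) → F}
    (hv : v ∈ plotkinCode F t (m + 1)) (h : upperHalf F m v = 0) :
    lowerHalf F m v ∈ plotkinCode F t m := by
  simpa [h] using hv.2

-- Of the two halves, the one with the smaller support is projected out first: this is the order
-- in which `heavyCount_pred_add_heavyCount_le` adds up the bounds for the halves.
theorem finrank_le_heavyCount_ncard_chi {t m : ℕ} {D : Submodule F (Fin (2 ^ m) → F)}
    (hD : D ≤ plotkinCode F t m) : finrank F D ≤ heavyCount t (chi D).ncard := by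
  induction m generalizing t with
  | zero =>
    obtain rfl | ht := eq_or_ne t 0
    · rw [heavyCount_zero_left]
      exact finrank_le_ncard_chi D
    · have hbot : D = ⊥ := by simpa [plotkinCode, ht] using hD
      rw [hbot, finrank_bot]
      exact Nat.zero_le _
  | succ m ih =>
    have bound {p q : (Fin (2 ^ (m + 1)) → F) →ₗ[F] (Fin (2 ^ m) → F)}
        (hpq : LinearMap.ker p ⊓ LinearMap.ker q = ⊥)
        (hp : ∀ v ∈ D, p v ∈ plotkinCode F (t - 1) m)
        (hq : ∀ v ∈ D, p v = 0 → q v ∈ plotkinCode F t m)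
        (hle : (chi (D.map p)).ncard ≤ (chi (D.map q)).ncard) :
        finrank F D ≤ heavyCount t ((chi (D.map p)).ncard + (chi (D.map q)).ncard) :=
      calc finrank F D
          = finrank F (D.map p) + finrank F ((D ⊓ LinearMap.ker p).map q) :=
            finrank_eq_finrank_map_add_finrank_map hpq D
        _ ≤ heavyCount (t - 1) (chi (D.map p)).ncard +
              heavyCount t (chi ((D ⊓ LinearMap.ker p).map q)).ncard :=
            add_le_add (ih (Submodule.map_le_iff_le_comap.2 hp))
              (ih (Submodule.map_le_iff_le_comap.2 fun v hv => hq v hv.1 hv.2))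
        _ ≤ heavyCount (t - 1) (chi (D.map p)).ncard + heavyCount t (chi (D.map q)).ncard := by
            gcongr
            exact heavyCount_mono t
              (Set.ncard_le_ncard (chi_mono (Submodule.map_mono inf_le_left)))
        _ ≤ heavyCount t ((chi (D.map p)).ncard + (chi (D.map q)).ncard) :=
            heavyCount_pred_add_heavyCount_le t hle
    have hker := ker_lowerHalf_inf_ker_upperHalf F m
    rw [← ncard_chi_lowerHalf_add_ncard_chi_upperHalf D]
    obtain hle | hle := le_total (chi (D.map (lowerHalf F m))).ncard
      (chi (D.map (upperHalf F m))).ncard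
    · exact bound hker (fun v hv => (hD hv).1)
        (fun v hv => upperHalf_mem_plotkinCode_of_lowerHalf_eq_zero (hD hv)) hle
    · rw [add_comm (Set.ncard _)]
      exact bound (inf_comm _ _ |>.trans hker) (fun v hv => upperHalf_mem_plotkinCode (hD hv))
        (fun v hv => lowerHalf_mem_plotkinCode_of_upperHalf_eq_zero (hD hv)) hle

end PlotkinCode

section ReedMuller

/-- The evaluation vector of the monomial `∏ j ∈ S, x_j`. Its value at `i` is `1` exactly when all
bits of `i` in `S` are set. -/
def monomialVec (F : Type) [Field F] (m : ℕ) (S : Finset ℕ) : Fin (2 ^ m) → F :=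
  fun i => if ∀ j ∈ S, (i : ℕ).testBit j then 1 else 0

theorem lowerHalf_monomialVec (F : Type) [Field F] (m : ℕ) (S : Finset ℕ) :
    lowerHalf F m (monomialVec F (m + 1) S) = if m ∈ S then 0 else monomialVec F m S := by
  ext i
  simp only [lowerHalf, LinearMap.funLeft_apply, monomialVec, Function.comp_apply,
    val_halvesEquiv_inl]
  by_cases hm : m ∈ S
  · rw [if_pos hm, if_neg fun hall => by simpa [Nat.testBit_lt_two_pow i.isLt] using hall m hm]
    rfl
  · rw [if_neg hm]
    rfl

theorem upperHalf_monomialVec (F : Type) [Field F] (m : ℕ) (S : Finset ℕ) :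
    upperHalf F m (monomialVec F (m + 1) S) = monomialVec F m (S.erase m) := by
  ext i
  simp only [upperHalf, LinearMap.funLeft_apply, monomialVec, Function.comp_apply,
    val_halvesEquiv_inr, testBit_two_pow_add i.isLt, mem_erase]
  congr 1
  grind

theorem monomialVec_mem_plotkinCode (F : Type) [Field F] {t m : ℕ} {S : Finset ℕ}
    (h : t ≤ m - #S) : monomialVec F m S ∈ plotkinCode F t m := by
  induction m generalizing t S with
  | zero =>
    obtain rfl : t = 0 := by omega
    exact Submodule.mem_top
  | succ m ih =>
    refine ⟨?_, ?_⟩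
    all_goals
      simp only [SetLike.mem_coe, Submodule.mem_comap, LinearMap.sub_apply, lowerHalf_monomialVec,
        upperHalf_monomialVec]
      split_ifs with hm
    · exact zero_mem _
    · exact ih (by omega)
    · have hcard := card_erase_add_one hm
      rw [sub_zero]
      exact ih (by omega)
    · rw [erase_eq_of_notMem hm, sub_self]
      exact zero_mem _

theorem eval_testBit_eq_sum_monomialVec {m : ℕ} (f : MvPolynomial (Fin m) (ZMod 2)) :
    (fun i : Fin (2 ^ m) =>
      MvPolynomial.eval (fun j : Fin m => if (i : ℕ).testBit j then 1 else 0) f) =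
      ∑ s ∈ f.support, f.coeff s • monomialVec (ZMod 2) m (s.support.map Fin.valEmbedding) := by
  ext i
  simp only [MvPolynomial.eval_eq, Finset.sum_apply, Pi.smul_apply, smul_eq_mul, monomialVec,
    forall_mem_map, Fin.valEmbedding_apply]
  refine sum_congr rfl fun s _ => congrArg _ ?_
  have hpow (j) (hj : j ∈ s.support) : (if (i : ℕ).testBit j then 1 else 0 : ZMod 2) ^ s j =
      if (i : ℕ).testBit j then 1 else 0 := by
    rw [ite_pow, one_pow, zero_pow (Finsupp.mem_support_iff.1 hj)]
  rw [prod_congr rfl hpow, prod_ite_zero, prod_const_one]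
  congr

theorem card_support_le_totalDegree {σ R : Type*} [CommSemiring R] {f : MvPolynomial σ R}
    {s : σ →₀ ℕ} (hs : s ∈ f.support) : #s.support ≤ f.totalDegree :=
  calc #s.support = ∑ _j ∈ s.support, 1 := card_eq_sum_ones _
    _ ≤ s.sum fun _ e => e :=
      sum_le_sum fun _ hj => Nat.one_le_iff_ne_zero.2 (Finsupp.mem_support_iff.1 hj)
    _ ≤ f.totalDegree := MvPolynomial.le_totalDegree hs

theorem RMcode_le_plotkinCode (r m : ℕ) : RMcode r m ≤ plotkinCode (ZMod 2) (m - r) m := by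
  refine Submodule.span_le.2 ?_
  rintro _ ⟨f, hf, rfl⟩
  rw [eval_testBit_eq_sum_monomialVec, SetLike.mem_coe]
  refine sum_mem fun s hs => Submodule.smul_mem _ _ (monomialVec_mem_plotkinCode _ ?_)
  have hcard := card_support_le_totalDegree hs
  rw [card_map]
  omega

/-- The indicator vector of the integers whose binary digits are dominated by those of `k`. -/
def downsetVec (F : Type) [Field F] (m k : ℕ) : Fin (2 ^ m) → F :=
  fun i => if (i : ℕ) &&& k = i then 1 else 0

theorem downsetVec_self (F : Type) [Field F] {m k : ℕ} (hk : k < 2 ^ m) :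
    downsetVec F m k ⟨k, hk⟩ = 1 :=
  if_pos (Nat.and_self k)

theorem downsetVec_eq_zero (F : Type) [Field F] {m k : ℕ} {i : Fin (2 ^ m)} (hi : k < i) :
    downsetVec F m k i = 0 :=
  if_neg fun h => (h.symm.le.trans Nat.and_le_right).not_gt hi

theorem linearIndependent_downsetVec (F : Type) [Field F] {m : ℕ} {K : Finset ℕ}
    (hK : ∀ k ∈ K, k < 2 ^ m) : LinearIndependent F fun k : K => downsetVec F m k :=
  linearIndependent_of_triangular _ (fun k => ⟨k, hK k k.2⟩)
    (fun k => by rw [downsetVec_self]; exact one_ne_zero) fun _ _ h => downsetVec_eq_zero F h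

theorem and_eq_left_iff_forall_testBit {m i k : ℕ} (hi : i < 2 ^ m) :
    i &&& k = i ↔ ∀ j : Fin m, ¬ k.testBit j → ¬ i.testBit j := by
  constructor
  · intro h j hk hij
    rw [← h, Nat.testBit_and, Bool.and_eq_true] at hij
    exact hk hij.2
  · refine fun h => Nat.eq_of_testBit_eq fun j => ?_
    rw [Nat.testBit_and]
    obtain hj | hj := lt_or_ge j m
    · have := h ⟨j, hj⟩
      grind
    · rw [Nat.testBit_lt_two_pow (hi.trans_le (Nat.pow_le_pow_right two_pos hj)), Bool.false_and]

theorem binaryWeight_add_card_filter_not_testBit {m k : ℕ} (hk : k < 2 ^ m) :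
    binaryWeight k + #{j : Fin m | ¬ k.testBit j} = m := by
  rw [binaryWeight_eq_card_filter_range hk, card_filter, sum_range, ← card_filter,
    card_filter_add_card_filter_not, card_univ, Fintype.card_fin]

theorem downsetVec_mem_RMcode {r m k : ℕ} (hk : k < 2 ^ m) (hw : m - r ≤ binaryWeight k) :
    downsetVec (ZMod 2) m k ∈ RMcode r m := by
  refine Submodule.subset_span
    ⟨∏ j ∈ ({j | ¬ k.testBit j} : Finset (Fin m)), (1 - MvPolynomial.X j), ?_, funext fun i => ?_⟩
  · have hfactor (j : Fin m) :
        (1 - MvPolynomial.X j : MvPolynomial (Fin m) (ZMod 2)).totalDegree ≤ 1 :=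
      (MvPolynomial.totalDegree_sub _ _).trans (by simp)
    refine (MvPolynomial.totalDegree_finsetProd _ _).trans
      ((sum_le_card_nsmul _ _ 1 fun j _ => hfactor j).trans ?_)
    have hcard := binaryWeight_add_card_filter_not_testBit hk
    rw [smul_eq_mul, mul_one]
    omega
  · have hfactor (j : Fin m) : (1 - if (i : ℕ).testBit j then 1 else 0 : ZMod 2) =
        if ¬ (i : ℕ).testBit j then 1 else 0 := by
      split_ifs <;> simp_all
    simp only [map_prod, map_sub, map_one, MvPolynomial.eval_X, hfactor, prod_ite_zero,
      prod_const_one, downsetVec, and_eq_left_iff_forall_testBit i.isLt, mem_filter_univ]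

theorem heavyCount_le_Ucap_RMcode {r m s : ℕ} (hs : s ≤ 2 ^ m) :
    heavyCount (m - r) s ≤ Ucap (RMcode r m) s := by
  let K := {k ∈ range s | m - r ≤ binaryWeight k}
  let D := Submodule.span (ZMod 2) (Set.range fun k : K => downsetVec (ZMod 2) m k)
  have hK : ∀ k ∈ K, k < s ∧ m - r ≤ binaryWeight k := fun k hk => by simpa [K] using hk
  have hD : D ≤ RMcode r m := by
    refine Submodule.span_le.2 ?_
    rintro _ ⟨k, rfl⟩
    exact downsetVec_mem_RMcode ((hK k k.2).1.trans_le hs) (hK k k.2).2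
  have hsupp : chi D ⊆ {i | (i : ℕ) < s} := by
    refine chi_subset_iff.2 (Submodule.span_le.2 ?_)
    rintro _ ⟨k, rfl⟩
    exact Submodule.mem_pi.2 fun i hi =>
      downsetVec_eq_zero _ ((hK k k.2).1.trans_le (not_lt.1 hi))
  have hcard : (chi D).ncard ≤ s := by
    rw [← min_eq_right hs, ← Fin.card_filter_val_lt, ← Set.ncard_coe_finset, coe_filter_univ]
    exact Set.ncard_le_ncard hsupp
  calc heavyCount (m - r) s = #K := Nat.count_eq_card_filter_range _ s
    _ = finrank (ZMod 2) D := by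
      rw [finrank_span_eq_card (linearIndependent_downsetVec _ fun k hk => (hK k hk).1.trans_le hs),
        Fintype.card_coe]
    _ ≤ Ucap (RMcode r m) s := le_Ucap hD hcard

theorem Ucap_RMcode {r m s : ℕ} (hs : s ≤ 2 ^ m) : Ucap (RMcode r m) s = heavyCount (m - r) s :=
  le_antisymm
    (Ucap_le fun _ hD hcard =>
      (finrank_le_heavyCount_ncard_chi (hD.trans (RMcode_le_plotkinCode r m))).trans
        (heavyCount_mono _ hcard))
    (heavyCount_le_Ucap_RMcode hs)

end ReedMuller

theorem add_two_mul_lt_two_pow_add_bet {m i j : ℕ} (hm : 2 ≤ m) (hi : i ≤ alph m - 2 ^ (m - 1))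
    (hj : j ≤ bet m - (alph m - 2 ^ (m - 1) + 1)) : i + 2 * j < 2 ^ (m - 2) + bet m := by
  obtain ⟨n, rfl⟩ := Nat.exists_eq_add_of_le' hm
  have hle := bet_le_alph n
  have hsum := alph_add_bet_add_one n
  have hα := alph_add_two n
  have hβ := bet_add_two n
  rw [show n + 2 - 1 = n + 1 by omega] at hi hj
  rw [Nat.add_sub_cancel]
  omega

theorem stmt10_general (r m : ℕ) (hm : 2 ≤ m) (i j : ℕ) (hi : i ≤ alph m - 2 ^ (m - 1))
    (hj : i + 2 * j < 2 ^ (m - 2) + bet m) :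
    ((Ucap (RMcode r m) (alph m) : ℤ) - Ucap (RMcode r m) (alph m - i)) +
      ((Ucap (RMcode r m) (bet m) : ℤ) - Ucap (RMcode r m) (bet m - j)) ≥
      (Ucap (RMcode r m) (i + j + 1) : ℤ) - Ucap (RMcode r m) 1 := by
  obtain ⟨n, rfl⟩ := Nat.exists_eq_add_of_le' hm
  have hsum := alph_add_bet_add_one (n + 2)
  have hα := alph_add_two n
  rw [Nat.add_sub_cancel] at hj
  rw [show n + 2 - 1 = n + 1 by omega, hα, Nat.add_sub_cancel_left] at hi
  have hcount := heavyCount_le_heavyCount_one_add_topCount (n + 2 - r) hi hj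
  have htop_α := heavyCount_sub_add_topCount (n + 2 - r) (alph (n + 2)) i
  have htop_β := heavyCount_sub_add_topCount (n + 2 - r) (bet (n + 2)) j
  iterate 6 rw [Ucap_RMcode (by omega)]
  omega

/-- Lemma `U_ineq`: for `m ≥ 3`, `0 ≤ r ≤ m−1`,
`0 ≤ i ≤ α − 2^{m−1}` and `0 ≤ j ≤ β − (α − 2^{m−1} + 1)`,
`(U_α − U_{α−i}) + (U_β − U_{β−j}) ≥ U_{i+j+1} − U_1`. -/
theorem stmt10 (r m : ℕ) (hm : 3 ≤ m) (hr : r ≤ m - 1) :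
    ∀ i j : ℕ, i ≤ alph m - 2 ^ (m - 1) → j ≤ bet m - (alph m - 2 ^ (m - 1) + 1) →
      ((Ucap (RMcode r m) (alph m) : ℤ) - Ucap (RMcode r m) (alph m - i)) +
        ((Ucap (RMcode r m) (bet m) : ℤ) - Ucap (RMcode r m) (bet m - j)) ≥
        (Ucap (RMcode r m) (i + j + 1) : ℤ) - Ucap (RMcode r m) 1 := by
  have hm : 2 ≤ m := by omega
  exact fun i j hi hj => stmt10_general r m hm i j hi (add_two_mul_lt_two_pow_add_bet hm hi hj)
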